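/- Let p be a prime, n ≥ 1, and k a field of characteristic p containing the finite field 𝔽_{pⁿ} (e.g. k algebraically closed of characteristic p). Let G = (𝔽_{pⁿ}, +) be the additive group of 𝔽_{pⁿ}. Let G act on the space S of homogeneous polynomials of degree pⁿ − 1 in k[X,Y] by the k-algebra substitution X ↦ X, Y ↦ Y + t·X for t ∈ G. Then S, as a module over the group algebra k[G], is isomorphic to k[G] itself, i.e. S is isomorphic to the regular representation of G over k. -/

import Mathlib

/-!
A homogeneous `f` of degree `d` in `X, Y` is determined by the polynomial `f(1, Y)` of degree at
most `d`, and hence, by Lagrange interpolation, by its values at any `d + 1` points `(1, x)`.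
For a finite additive subgroup `G` of `k` of order `d + 1`, take the points `(1, -s)` with `s ∈ G`:
the substitution `Y ↦ Y + t X` sends the value at `(1, -s)` to the value at `(1, -(s - t))`, so
`f ↦ ∑ s, f(1, -s) [s]` turns it into left multiplication by `[t]` in `k[G]`.
-/

open MvPolynomial

/-- For `t` in the finite field `𝔽_{pⁿ} = GaloisField p n` contained in `k`, the `k`-algebra
substitution `X ↦ X`, `Y ↦ Y + t·X` on `k[X,Y]` (with `X = X 0`, `Y = X 1`); these
substitutions define an action of the additive group `(𝔽_{pⁿ}, +)`. -/
noncomputable def substY (p n : ℕ) [Fact p.Prime] (k : Type*) [Field k]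
    [Algebra (GaloisField p n) k] (t : GaloisField p n) :
    MvPolynomial (Fin 2) k →ₐ[k] MvPolynomial (Fin 2) k :=
  MvPolynomial.aeval ![MvPolynomial.X 0,
    MvPolynomial.X 1 + MvPolynomial.C (algebraMap (GaloisField p n) k t) * MvPolynomial.X 0]

section Dehomogenization

variable {R : Type*} [CommSemiring R]

/-- Dehomogenization `f(X, Y) ↦ f(1, Y)` of bivariate polynomials. It is the first variable that
is set to `1`, whereas its partial inverse `Polynomial.homogenize` introduces the second one. -/
noncomputable def dehomogenize : MvPolynomial (Fin 2) R →ₐ[R] Polynomial R :=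
  aeval ![1, Polynomial.X]

theorem eval_dehomogenize (x : R) (f : MvPolynomial (Fin 2) R) :
    (dehomogenize f).eval x = eval ![1, x] f := by
  have h : (Polynomial.aeval x).comp dehomogenize = aeval (R := R) ![1, x] := by
    ext i
    fin_cases i <;> simp [dehomogenize]
  simpa [← Polynomial.coe_aeval_eq_eval, aeval_eq_eval] using DFunLike.congr_fun h f

theorem dehomogenize_eq_aeval_rename_swap (f : MvPolynomial (Fin 2) R) :
    dehomogenize f = aeval ![Polynomial.X, 1] (rename (Equiv.swap 0 1) f) := by
  rw [aeval_rename, dehomogenize]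
  congr 2
  ext1 i
  fin_cases i <;> rfl

theorem rename_swap_rename_swap {σ : Type*} [DecidableEq σ] (i j : σ) (f : MvPolynomial σ R) :
    rename (Equiv.swap i j) (rename (Equiv.swap i j) f) = f := by
  rw [rename_rename, ← Equiv.coe_trans, Equiv.swap_swap, Equiv.coe_refl, rename_id_apply]

theorem dehomogenize_rename_swap_homogenize {P : Polynomial R} {d : ℕ} (hP : P.natDegree ≤ d) :
    dehomogenize (rename (Equiv.swap 0 1) (P.homogenize d)) = P := by
  rw [dehomogenize_eq_aeval_rename_swap, rename_swap_rename_swap,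
    Polynomial.aeval_homogenize_X_one P hP]

theorem rename_swap_homogenize_dehomogenize {f : MvPolynomial (Fin 2) R} {d : ℕ}
    (hf : f.IsHomogeneous d) :
    rename (Equiv.swap 0 1) ((dehomogenize f).homogenize d) = f := by
  rw [Polynomial.homogenize_eq_of_isHomogeneous hf.rename_isHomogeneous
    (dehomogenize_eq_aeval_rename_swap f).symm, rename_swap_rename_swap]

theorem natDegree_dehomogenize_le {f : MvPolynomial (Fin 2) R} {d : ℕ} (hf : f.IsHomogeneous d) :
    (dehomogenize f).natDegree ≤ d := by
  have hdeg : ∀ i, (![1, Polynomial.X] i : Polynomial R).natDegree ≤ 1 :=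
    Fin.forall_fin_two.2 ⟨by simp, Polynomial.natDegree_X_le⟩
  simpa only [dehomogenize, mul_one] using aeval_natDegree_le f hf.totalDegree_le _ hdeg

theorem mem_degreeLT_succ_iff_natDegree_le {A : Type*} [Semiring A] {P : Polynomial A} {d : ℕ} :
    P ∈ Polynomial.degreeLT A (d + 1) ↔ P.natDegree ≤ d := by
  rw [Polynomial.degreeLT_succ_eq_degreeLE, Polynomial.mem_degreeLE,
    Polynomial.natDegree_le_iff_degree_le]

/-- Dehomogenization as an isomorphism between the homogeneous bivariate polynomials of degree `d`
and the univariate polynomials of degree at most `d`. -/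
noncomputable def homogeneousEquivDegreeLT (d : ℕ) :
    homogeneousSubmodule (Fin 2) R d ≃ₗ[R] Polynomial.degreeLT R (d + 1) where
  toLinearMap := dehomogenize.toLinearMap.restrict fun _ hf ↦
    mem_degreeLT_succ_iff_natDegree_le.2 (natDegree_dehomogenize_le hf)
  invFun P := ⟨rename (Equiv.swap 0 1) (P.1.homogenize d),
    P.1.isHomogeneous_homogenize.rename_isHomogeneous⟩
  left_inv f := Subtype.ext (rename_swap_homogenize_dehomogenize f.2)
  right_inv P := Subtype.ext
    (dehomogenize_rename_swap_homogenize (mem_degreeLT_succ_iff_natDegree_le.1 P.2))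

end Dehomogenization

section Evaluation

variable {k ι : Type*} [Field k] [Fintype ι] [DecidableEq ι] {d : ℕ}

/-- Lagrange interpolation for binary forms: a homogeneous polynomial of degree `d` corresponds to
its values at the `d + 1` points `(1, v i)`. -/
noncomputable def homogeneousEvalEquiv (v : ι → k) (hv : Function.Injective v)
    (hd : Fintype.card ι = d + 1) : homogeneousSubmodule (Fin 2) k d ≃ₗ[k] (ι → k) :=
  homogeneousEquivDegreeLT d ≪≫ₗ
    LinearEquiv.ofEq _ _ (by rw [Finset.card_univ, hd]) ≪≫ₗ
    Lagrange.funEquivDegreeLT (s := Finset.univ) hv.injOn ≪≫ₗ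
    LinearEquiv.funCongrLeft k k (Equiv.subtypeUnivEquiv Finset.mem_univ).symm

theorem homogeneousEvalEquiv_apply (v : ι → k) (hv : Function.Injective v)
    (hd : Fintype.card ι = d + 1) (f : homogeneousSubmodule (Fin 2) k d) (i : ι) :
    homogeneousEvalEquiv v hv hd f i = eval ![1, v i] (f : MvPolynomial (Fin 2) k) :=
  eval_dehomogenize (v i) f.1

end Evaluation

section Shear

variable {R : Type*} [CommSemiring R]

/-- The substitution `X ↦ X`, `Y ↦ Y + t X` for an arbitrary scalar `t`; for `t` in a finite field
this is `substY`. -/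
noncomputable def shear (t : R) : MvPolynomial (Fin 2) R →ₐ[R] MvPolynomial (Fin 2) R :=
  aeval ![X 0, X 1 + C t * X 0]

theorem eval_shear (t a b : R) (f : MvPolynomial (Fin 2) R) :
    eval ![a, b] (shear t f) = eval ![a, b + t * a] f := by
  have h : (aeval ![a, b]).comp (shear t) = aeval (R := R) ![a, b + t * a] := by
    ext i
    fin_cases i <;> simp [shear]
  simpa [aeval_eq_eval] using DFunLike.congr_fun h f

theorem isHomogeneous_shear (t : R) {f : MvPolynomial (Fin 2) R} {d : ℕ}
    (hf : f.IsHomogeneous d) : (shear t f).IsHomogeneous d := by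
  have hX : ∀ i, (![X 0, X 1 + C t * X 0] i : MvPolynomial (Fin 2) R).IsHomogeneous 1 :=
    Fin.forall_fin_two.2
      ⟨isHomogeneous_X R 0, (isHomogeneous_X R 1).add (isHomogeneous_C_mul_X t 0)⟩
  simpa only [shear, one_mul] using hf.aeval _ hX

end Shear

section RegularRepresentation

variable {k G : Type*} [Semiring k] [Finite G]

/-- A function `a` on a finite set `G` as the formal sum `∑ g, a g • [g]`. -/
noncomputable def funEquivMonoidAlgebra : (G → k) ≃ₗ[k] MonoidAlgebra k G :=
  (Finsupp.linearEquivFunOnFinite k k G).symm ≪≫ₗ (MonoidAlgebra.coeffLinearEquiv k).symm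

theorem funEquivMonoidAlgebra_translate [Group G] (g : G) (a : G → k) :
    funEquivMonoidAlgebra (fun h ↦ a (g⁻¹ * h)) =
      MonoidAlgebra.single g 1 * funEquivMonoidAlgebra a := by
  ext h
  rw [MonoidAlgebra.coeff_single_mul_apply, one_mul]
  rfl

end RegularRepresentation

theorem homogeneousSubmodule_iso_regular_representation_general {k G : Type*} [Field k]
    [AddGroup G] (φ : G →+ k) (hφ : Function.Injective φ) {d : ℕ} (hd : Nat.card G = d + 1) :
    ∃ e : homogeneousSubmodule (Fin 2) k d ≃ₗ[k] MonoidAlgebra k (Multiplicative G),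
      ∀ (t : G) (f : homogeneousSubmodule (Fin 2) k d),
        shear (φ t) (f : MvPolynomial (Fin 2) k) =
          ↑(e.symm (MonoidAlgebra.single (Multiplicative.ofAdd t) (1 : k) * e f)) := by
  classical
  have : Finite G := Nat.finite_of_card_ne_zero (by omega)
  have := Fintype.ofFinite (Multiplicative G)
  let v (s : Multiplicative G) : k := -φ s.toAdd
  have hv : Function.Injective v := neg_injective.comp (hφ.comp Multiplicative.toAdd.injective)
  have hcard : Fintype.card (Multiplicative G) = d + 1 := by
    rw [← Nat.card_eq_fintype_card, Nat.card_congr Multiplicative.toAdd, hd]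
  let values := homogeneousEvalEquiv v hv hcard
  let e := values ≪≫ₗ funEquivMonoidAlgebra
  refine ⟨e, fun t f ↦ ?_⟩
  let tf : homogeneousSubmodule (Fin 2) k d := ⟨shear (φ t) f, isHomogeneous_shear (φ t) f.2⟩
  have values_shear : values tf = fun s ↦ values f ((Multiplicative.ofAdd t)⁻¹ * s) := by
    funext s
    simp [values, tf, v, homogeneousEvalEquiv_apply, eval_shear]
  have e_shear : e tf = MonoidAlgebra.single (Multiplicative.ofAdd t) 1 * e f :=
    (congrArg funEquivMonoidAlgebra values_shear).trans (funEquivMonoidAlgebra_translate _ _)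
  rw [← e_shear, e.symm_apply_apply]

/-- Let `p` be a prime, `n ≥ 1`, and `k` a field of characteristic `p`
containing the finite field `𝔽_{pⁿ}`. Let `G = (𝔽_{pⁿ}, +)` act on the space `S` of
homogeneous polynomials of degree `pⁿ − 1` in `k[X,Y]` by the substitutions
`X ↦ X, Y ↦ Y + t·X`. Then `S`, as a module over the group algebra `k[G]`, is isomorphic to
`k[G]` itself, i.e. `S` is isomorphic to the regular representation of `G` over `k`: there
is a `k`-linear equivalence `e : S ≃ k[G]` intertwining the action of each `t ∈ G` on `S`
with left multiplication by the group element `t` in `k[G]`. -/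
theorem homogeneousSubmodule_iso_regular_representation
    (p n : ℕ) [hp : Fact p.Prime] (hn : 1 ≤ n)
    (k : Type*) [Field k] [CharP k p] [Algebra (GaloisField p n) k] :
    ∃ e : (MvPolynomial.homogeneousSubmodule (Fin 2) k (p ^ n - 1)) ≃ₗ[k]
        MonoidAlgebra k (Multiplicative (GaloisField p n)),
      ∀ (t : GaloisField p n)
        (f : MvPolynomial.homogeneousSubmodule (Fin 2) k (p ^ n - 1)),
        substY p n k t (f : MvPolynomial (Fin 2) k) =
          ↑(e.symm (MonoidAlgebra.single (Multiplicative.ofAdd t) (1 : k) * e f)) := by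
  have hd : Nat.card (GaloisField p n) = p ^ n - 1 + 1 := by
    rw [GaloisField.card p n (by omega), Nat.sub_add_cancel (Nat.pow_pos hp.out.pos)]
  exact homogeneousSubmodule_iso_regular_representation_general
    (algebraMap (GaloisField p n) k).toAddMonoidHom (algebraMap (GaloisField p n) k).injective hd
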